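/- arXiv:1902.04960 — 2 statements merged into one kernel-verified Lean document; each statement's English description precedes it below -/
import Mathlib

section
/- Let G be a finite simple graph, let j ≥ 1 be an integer, and let G + jI denote the disjoint union of G with j isolated vertices. For integers i, j, let Surj(i,j) denote the number of surjective functions from a set of size i onto a set of size j. Then for every integer k ≥ 1: #Dom_k(G + jI) = Σ_{i=1}^{k} C(k,i) · Surj(i,j) · #Dom_{k−i}(G), where C(k,i) is the binomial coefficient and Dom_0(G) is the set of maps from the empty set to V(G) whose (empty) image dominates G. -/
/-!
An isolated vertex is dominated only by itself, and vertices of `G` are dominated only from within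
`G`. Given `a : ι → V ⊕ Fin j`, let `S` be the set of indices sent to isolated vertices. Then `a`
is glued from its restrictions `f : S → Fin j` and `g : Sᶜ → V`, and `a` dominates `G + jI` exactly
when `f` is surjective and `g` dominates `G` (`dominates_glue`). So the dominating maps of `G + jI`
are in bijection with the triples `(S, f, g)` of this kind (`glueSigma_bijective`). The number of
pairs `(f, g)` depends only on the size `i` of `S`, so grouping the sets `S` by size produces the
binomial coefficients; the term `i = 0` vanishes because `j ≥ 1`.
-/

/-- `Dom_k(G)`: maps `a : {1,…,k} → V(G)` whose image dominates `G`. -/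
def domSet {V : Type} (G : SimpleGraph V) (k : ℕ) : Set (Fin k → V) :=
  {a | ∀ v : V, v ∉ Set.range a → ∃ u ∈ Set.range a, G.Adj v u}

/-- `G + jI`: the disjoint union of `G` with `j` isolated vertices. -/
def addIsolated {V : Type} (G : SimpleGraph V) (j : ℕ) : SimpleGraph (V ⊕ Fin j) :=
  SimpleGraph.fromRel fun a b => ∃ u w, a = Sum.inl u ∧ b = Sum.inl w ∧ G.Adj u w

/-- `Surj(i, j)`: the number of surjective functions from a set of size `i` onto a
set of size `j`. -/
noncomputable def surjCount (i j : ℕ) : ℕ :=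
  {f : Fin i → Fin j | Function.Surjective f}.ncard

/-- The image of `a` dominates `G`. The index type is arbitrary, so that restrictions of a map to
subsets of `{1,…,k}` are covered; for `ι = Fin k` this is membership in `domSet G k`. -/
def Dominates {ι V : Type} (G : SimpleGraph V) (a : ι → V) : Prop :=
  ∀ v : V, v ∉ Set.range a → ∃ u ∈ Set.range a, G.Adj v u

/-- The map that is `f` on `S`, with values among the isolated vertices, and `g` off `S`, with
values in `V`. -/
def glue {ι V W : Type} [DecidableEq ι] (S : Finset ι) (f : {x // x ∈ S} → W)
    (g : {x // x ∉ S} → V) : ι → V ⊕ W :=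
  fun x => if h : x ∈ S then Sum.inr (f ⟨x, h⟩) else Sum.inl (g ⟨x, h⟩)

section Glue

variable {ι V W : Type} [DecidableEq ι] (S : Finset ι) (f : {x // x ∈ S} → W)
    (g : {x // x ∉ S} → V)

lemma glue_of_mem {x : ι} (h : x ∈ S) : glue S f g x = Sum.inr (f ⟨x, h⟩) := dif_pos h

lemma glue_of_notMem {x : ι} (h : x ∉ S) : glue S f g x = Sum.inl (g ⟨x, h⟩) := dif_neg h

lemma inr_mem_range_glue (w : W) : Sum.inr w ∈ Set.range (glue S f g) ↔ w ∈ Set.range f := by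
  constructor
  · rintro ⟨x, hx⟩
    by_cases h : x ∈ S
    · rw [glue_of_mem S f g h] at hx
      exact ⟨_, Sum.inr_injective hx⟩
    · simp [glue_of_notMem S f g h] at hx
  · rintro ⟨x, rfl⟩
    exact ⟨x.1, glue_of_mem S f g x.2⟩

lemma inl_mem_range_glue (v : V) : Sum.inl v ∈ Set.range (glue S f g) ↔ v ∈ Set.range g := by
  constructor
  · rintro ⟨x, hx⟩
    by_cases h : x ∈ S
    · simp [glue_of_mem S f g h] at hx
    · rw [glue_of_notMem S f g h] at hx
      exact ⟨_, Sum.inl_injective hx⟩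
  · rintro ⟨x, rfl⟩
    exact ⟨x.1, glue_of_notMem S f g x.2⟩

lemma mem_iff_isRight_glue (x : ι) : x ∈ S ↔ (glue S f g x).isRight := by
  by_cases h : x ∈ S
  · simp [glue_of_mem S f g h, h]
  · simp [glue_of_notMem S f g h, h]

end Glue

lemma addIsolated_adj_inl {V : Type} (G : SimpleGraph V) (j : ℕ) (u v : V) :
    (addIsolated G j).Adj (Sum.inl u) (Sum.inl v) ↔ G.Adj u v := by
  simp only [addIsolated, SimpleGraph.fromRel_adj]
  constructor
  · rintro ⟨-, ⟨a, b, ha, hb, h⟩ | ⟨a, b, ha, hb, h⟩⟩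
    · cases ha; cases hb; exact h
    · cases ha; cases hb; exact h.symm
  · intro h
    exact ⟨fun e => h.ne (Sum.inl_injective e), Or.inl ⟨u, v, rfl, rfl, h⟩⟩

lemma not_addIsolated_adj_inr {V : Type} (G : SimpleGraph V) (j : ℕ) (w : Fin j)
    (y : V ⊕ Fin j) : ¬ (addIsolated G j).Adj y (Sum.inr w) := by
  simp [addIsolated, SimpleGraph.fromRel_adj]

lemma dominates_glue {ι V : Type} [DecidableEq ι] (G : SimpleGraph V) (j : ℕ) (S : Finset ι)
    (f : {x // x ∈ S} → Fin j) (g : {x // x ∉ S} → V) :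
    Dominates (addIsolated G j) (glue S f g) ↔ Function.Surjective f ∧ Dominates G g := by
  constructor
  · intro h
    refine ⟨fun w => ?_, fun v hv => ?_⟩
    · by_contra hw
      obtain ⟨u, -, hu⟩ := h (Sum.inr w) (fun hm => hw ((inr_mem_range_glue S f g w).1 hm))
      exact not_addIsolated_adj_inr G j w u hu.symm
    · obtain ⟨u, hu, hadj⟩ := h (Sum.inl v) (fun hm => hv ((inl_mem_range_glue S f g v).1 hm))
      rcases u with u | w
      · exact ⟨u, (inl_mem_range_glue S f g u).1 hu, (addIsolated_adj_inl G j v u).1 hadj⟩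
      · exact absurd hadj (not_addIsolated_adj_inr G j w _)
  · rintro ⟨hf, hg⟩ (v | w) hv
    · obtain ⟨u, hu, hadj⟩ := hg v (fun hm => hv ((inl_mem_range_glue S f g v).2 hm))
      exact ⟨Sum.inl u, (inl_mem_range_glue S f g u).2 hu, (addIsolated_adj_inl G j v u).2 hadj⟩
    · exact absurd ((inr_mem_range_glue S f g w).2 (hf w)) hv

lemma exists_eq_glue {ι V W : Type} [Fintype ι] [DecidableEq ι] (a : ι → V ⊕ W) :
    ∃ (S : Finset ι) (f : {x // x ∈ S} → W) (g : {x // x ∉ S} → V), glue S f g = a := by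
  have hr : ∀ x : {x // x ∈ Finset.univ.filter fun x => (a x).isRight}, (a x).isRight :=
    fun x => (Finset.mem_filter.1 x.2).2
  have hl : ∀ x : {x // x ∉ Finset.univ.filter fun x => (a x).isRight}, (a x).isLeft := by
    rintro ⟨x, hx⟩
    simpa using hx
  refine ⟨Finset.univ.filter fun x => (a x).isRight, fun x => (a x).getRight (hr x),
    fun x => (a x).getLeft (hl x), funext fun x => ?_⟩
  by_cases h : x ∈ Finset.univ.filter fun x => (a x).isRight
  · rw [glue_of_mem _ _ _ h, Sum.inr_getRight]
  · rw [glue_of_notMem _ _ _ h, Sum.inl_getLeft]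

/-- The gluing map from the triples `(S, f, g)`, with `f` surjective and `g` dominating `G`, to the
dominating maps of `G + jI`. -/
def glueSigma {ι V : Type} [DecidableEq ι] (G : SimpleGraph V) (j : ℕ) :
    (Σ S : Finset ι, {f : {x // x ∈ S} → Fin j // Function.Surjective f} ×
      {g : {x // x ∉ S} → V // Dominates G g}) →
      {a : ι → V ⊕ Fin j // Dominates (addIsolated G j) a} :=
  fun t => ⟨glue t.1 t.2.1.1 t.2.2.1, (dominates_glue G j _ _ _).2 ⟨t.2.1.2, t.2.2.2⟩⟩

lemma glueSigma_bijective {ι V : Type} [Fintype ι] [DecidableEq ι] (G : SimpleGraph V) (j : ℕ) :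
    Function.Bijective (glueSigma (ι := ι) G j) := by
  constructor
  · rintro ⟨S, ⟨f, hf⟩, ⟨g, hg⟩⟩ ⟨S', ⟨f', hf'⟩, ⟨g', hg'⟩⟩ h
    replace h : glue S f g = glue S' f' g' := congrArg Subtype.val h
    obtain rfl : S = S' := by
      ext x
      rw [mem_iff_isRight_glue S f g, mem_iff_isRight_glue S' f' g', h]
    obtain rfl : f = f' := by
      funext x
      have := congrFun h x.1
      rw [glue_of_mem _ _ _ x.2, glue_of_mem _ _ _ x.2] at this
      exact Sum.inr_injective this
    obtain rfl : g = g' := by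
      funext x
      have := congrFun h x.1
      rw [glue_of_notMem _ _ _ x.2, glue_of_notMem _ _ _ x.2] at this
      exact Sum.inl_injective this
    rfl
  · rintro ⟨a, ha⟩
    obtain ⟨S, f, g, rfl⟩ := exists_eq_glue a
    obtain ⟨hf, hg⟩ := (dominates_glue G j S f g).1 ha
    exact ⟨⟨S, ⟨f, hf⟩, ⟨g, hg⟩⟩, rfl⟩

lemma card_surjective_eq {ι : Type} {n : ℕ} (e : ι ≃ Fin n) (j : ℕ) :
    Nat.card {f : ι → Fin j // Function.Surjective f} = surjCount n j := by
  rw [surjCount, ← Nat.card_coe_set_eq]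
  refine Nat.card_congr ((e.arrowCongr (Equiv.refl _)).subtypeEquiv fun f => ?_)
  exact (e.symm.surjective_comp f).symm

lemma card_dominates_eq {ι V : Type} {n : ℕ} (e : ι ≃ Fin n) (G : SimpleGraph V) :
    Nat.card {f : ι → V // Dominates G f} = (domSet G n).ncard := by
  rw [← Nat.card_coe_set_eq]
  refine Nat.card_congr ((e.arrowCongr (Equiv.refl _)).subtypeEquiv fun f => ?_)
  have : Set.range (e.arrowCongr (Equiv.refl V) f) = Set.range f :=
    e.symm.surjective.range_comp f
  simp only [Dominates, domSet, Set.mem_ofPred_eq, this]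

/-- #Dom_k(G + jI) = Σ_{i=1}^{k} C(k,i) · Surj(i,j) · #Dom_{k−i}(G). -/
theorem stmt_16 {V : Type} [Fintype V] (G : SimpleGraph V) (j : ℕ) (hj : 1 ≤ j)
    (k : ℕ) (hk : 1 ≤ k) :
    (domSet (addIsolated G j) k).ncard =
      ∑ i ∈ Finset.Icc 1 k, Nat.choose k i * surjCount i j * (domSet G (k - i)).ncard := by
  have hzero : surjCount 0 j = 0 := by
    rw [surjCount, Set.ncard_eq_zero]
    ext f
    simp only [Set.mem_ofPred_eq, Set.mem_empty_iff_false, iff_false]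
    intro hf
    exact (hf ⟨0, hj⟩).choose.elim0
  have hterm : ∀ S : Finset (Fin k),
      Nat.card ({f : {x // x ∈ S} → Fin j // Function.Surjective f} ×
        {g : {x // x ∉ S} → V // Dominates G g}) =
      surjCount S.card j * (domSet G (k - S.card)).ncard := by
    intro S
    rw [Nat.card_prod, card_surjective_eq S.equivFin,
      card_dominates_eq (Fintype.equivFinOfCardEq (n := k - S.card) (by simp))]
  rw [← card_dominates_eq (Equiv.refl (Fin k)),
    ← Nat.card_congr (Equiv.ofBijective _ (glueSigma_bijective G j)), Nat.card_sigma]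
  simp_rw [hterm]
  have hsum := Finset.sum_powerset_apply_card
    (fun i => surjCount i j * (domSet G (k - i)).ncard) (x := (Finset.univ : Finset (Fin k)))
  rw [Finset.powerset_univ, Finset.card_univ, Fintype.card_fin] at hsum
  rw [hsum, Finset.range_eq_Ico, Finset.sum_eq_sum_Ico_succ_bot (Nat.succ_pos k)]
  simp only [hzero, zero_mul, mul_zero, zero_add, smul_eq_mul, mul_assoc]
  rfl
end

section
/- Let k ≥ 1 and let (H,X) be a graphical conjunctive query such that some connected component C of the induced subgraph H[V(H) ∖ X] has the property that at least k vertices of X have a neighbor in C (i.e. the dominating star size of (H,X) is at least k). Let (S_k, X_k) be the k-star query, where S_k has vertex set {y, x_1, …, x_k} and edges {x_i, y} for i ∈ {1,…,k}, and X_k = {x_1,…,x_k}. Then (S_k, X_k) is a query minor of (H,X). -/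
/-!
Fix a quantified vertex `c` in the component `C` and `k` distinct free vertices `f i`, each of them
reachable from `c` by a walk whose inner vertices are all quantified. As long as `c` has a quantified
neighbour `v`, contract the edge `cv` into `c`: no free vertex is touched, and walks are mapped to
walks, so the situation persists in a smaller graph (`isMinorOf_of_reach`). When `c` has no
quantified neighbour left, each of the walks must be a single edge, so `c` and the `f i` span a star.
Deleting the other edges (`reflTransGen_of_le`) and then the other, now isolated, vertices
(`isMinorOf_of_star`) leaves the `k`-star query.
-/

/-- A graphical conjunctive query: a finite simple graph together with a set of
free variables. -/
structure Query where
  V : Type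
  fin : Fintype V
  graph : SimpleGraph V
  free : Set V

attribute [instance] Query.fin

/-- Edge deletion: delete the edge `{u, v}`, keeping the free variables. -/
def Query.deleteEdge (Q : Query) (u v : Q.V) : Query :=
  ⟨Q.V, Q.fin, Q.graph.deleteEdges {s(u, v)}, Q.free⟩

/-- Vertex deletion: delete the (isolated) vertex `v`, removing it from the free
variables if present. -/
noncomputable def Query.deleteVertex (Q : Query) (v : Q.V) : Query :=
  ⟨↥({u : Q.V | u ≠ v}), Fintype.ofFinite _, Q.graph.induce {u : Q.V | u ≠ v},
    {u : ↥({u : Q.V | u ≠ v}) | (u : Q.V) ∈ Q.free}⟩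

/-- Edge contraction: contract the edge `{u, v}` to the vertex `u` (which represents
the merged vertex `w`); `w` is free iff `u` or `v` was free. -/
noncomputable def Query.contract (Q : Query) (u v : Q.V) : Query :=
  ⟨↥({x : Q.V | x ≠ v}), Fintype.ofFinite _,
    SimpleGraph.fromRel (fun a b => Q.graph.Adj a.val b.val ∨ (a.val = u ∧ Q.graph.Adj v b.val)),
    {x : ↥({x : Q.V | x ≠ v}) | (x : Q.V) ∈ Q.free ∨ ((x : Q.V) = u ∧ v ∈ Q.free)}⟩

/-- Two queries are isomorphic if there is a graph isomorphism mapping the free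
variables of one onto those of the other. -/
def Query.IsoTo (Q Q' : Query) : Prop :=
  ∃ e : Q.graph ≃g Q'.graph, ⇑e '' Q.free = Q'.free

/-- One-step minor operations on queries (up to isomorphism / renaming). -/
inductive QueryStep : Query → Query → Prop
  | edgeDel (Q : Query) (u v : Q.V) (h : Q.graph.Adj u v) : QueryStep Q (Q.deleteEdge u v)
  | vertexDel (Q : Query) (v : Q.V) (h : ∀ w, ¬ Q.graph.Adj v w) : QueryStep Q (Q.deleteVertex v)
  | contract (Q : Query) (u v : Q.V) (h : Q.graph.Adj u v) : QueryStep Q (Q.contract u v)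
  | iso (Q Q' : Query) (h : Q.IsoTo Q') : QueryStep Q Q'

/-- `Q'` is a query minor of `Q` if it arises from `Q` by a finite sequence of
one-step minor operations. -/
def Query.IsMinorOf (Q' Q : Query) : Prop := Relation.ReflTransGen QueryStep Q Q'

/-- The k-star `S_k`: center `y` (encoded `Sum.inr ()`) adjacent to the leaves
`x_1, …, x_k` (encoded `Sum.inl i`). -/
def starGraph (k : ℕ) : SimpleGraph (Fin k ⊕ Unit) :=
  SimpleGraph.fromRel fun a b => ∃ i : Fin k, a = Sum.inl i ∧ b = Sum.inr ()

/-- The k-star query `(S_k, X_k)` with free variables the k leaves. -/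
def starQuery (k : ℕ) : Query :=
  ⟨Fin k ⊕ Unit, inferInstance, starGraph k, Set.range Sum.inl⟩

theorem card_ne_lt {V : Type} [Finite V] (v : V) :
    Nat.card ↥({x : V | x ≠ v}) < Nat.card V :=
  Finite.card_subtype_lt (p := fun x => x ≠ v) (x := v) (by simp)

/-- Any spanning subgraph arises by successive edge deletions. -/
theorem reflTransGen_of_le {V : Type} (fin : Fintype V) (X : Set V) (G' : SimpleGraph V)
    (G : SimpleGraph V) (hle : G' ≤ G) :
    Relation.ReflTransGen QueryStep ⟨V, fin, G, X⟩ ⟨V, fin, G', X⟩ := by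
  induction G using WellFoundedLT.induction with
  | ind G ih =>
    by_cases hG : G ≤ G'
    · rw [le_antisymm hle hG]
    · obtain ⟨u, v, huv, hn⟩ : ∃ u v, G.Adj u v ∧ ¬ G'.Adj u v := by
        by_contra! hcon
        exact hG fun u v h => hcon u v h
      have hlt : G.deleteEdges {s(u, v)} < G := by
        refine lt_of_le_of_ne (G.deleteEdges_le _) fun h => ?_
        rw [← h] at huv
        simp at huv
      have hle' : G' ≤ G.deleteEdges {s(u, v)} := by
        intro a b hab
        rw [SimpleGraph.deleteEdges_adj]
        refine ⟨hle hab, fun h => hn ?_⟩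
        rw [Set.mem_singleton_iff] at h
        rw [← SimpleGraph.mem_edgeSet, ← h]
        exact hab
      exact Relation.ReflTransGen.head (QueryStep.edgeDel ⟨V, fin, G, X⟩ u v huv) (ih _ hlt hle')

/-- A query consisting of a copy `g` of the `k`-star together with isolated vertices has the
`k`-star query as a minor. -/
theorem isMinorOf_of_star (k : ℕ) (n : ℕ) : ∀ (Q : Query) (g : Fin k ⊕ Unit → Q.V),
    Nat.card Q.V = n → Function.Injective g →
    (∀ x y, Q.graph.Adj x y ↔ ∃ a b, (starGraph k).Adj a b ∧ g a = x ∧ g b = y) →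
    (∀ a, g a ∈ Q.free ↔ a ∈ Set.range Sum.inl) → (starQuery k).IsMinorOf Q := by
  induction n using Nat.strong_induction_on with
  | _ n ih =>
    intro Q g hn hg hadj hfree
    by_cases hs : Function.Surjective g
    · let e : Fin k ⊕ Unit ≃ Q.V := Equiv.ofBijective g ⟨hg, hs⟩
      let e' : starGraph k ≃g Q.graph := ⟨e, by
        intro a b
        change Q.graph.Adj (g a) (g b) ↔ _
        rw [hadj]
        constructor
        · rintro ⟨a', b', h, ha, hb⟩
          rwa [← hg ha, ← hg hb]
        · intro h
          exact ⟨a, b, h, rfl, rfl⟩⟩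
      refine Relation.ReflTransGen.single (QueryStep.iso _ _ ⟨e'.symm, ?_⟩)
      change _ = Set.range Sum.inl
      ext a
      refine Iff.trans ?_ (hfree a)
      constructor
      · rintro ⟨x, hx, rfl⟩
        have : g (e'.symm x) = x := e'.apply_symm_apply x
        exact this.symm ▸ hx
      · intro h
        exact ⟨g a, h, e'.symm_apply_apply a⟩
    · obtain ⟨v, hv⟩ : ∃ v, ∀ a, g a ≠ v := by
        simpa [Function.Surjective] using hs
      have hiso : ∀ w, ¬ Q.graph.Adj v w := by
        intro w hw
        obtain ⟨a, b, -, ha, -⟩ := (hadj v w).1 hw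
        exact hv a ha
      refine Relation.ReflTransGen.head (QueryStep.vertexDel Q v hiso) ?_
      refine ih _ (hn ▸ card_ne_lt v) (Q.deleteVertex v) (fun a => ⟨g a, hv a⟩) rfl ?_ ?_ ?_
      · intro a b hab
        exact hg (congrArg Subtype.val hab)
      · intro x y
        change Q.graph.Adj x.1 y.1 ↔ _
        rw [hadj]
        constructor
        · rintro ⟨a, b, hab, ha, hb⟩
          exact ⟨a, b, hab, Subtype.ext ha, Subtype.ext hb⟩
        · rintro ⟨a, b, hab, ha, hb⟩
          exact ⟨a, b, hab, congrArg Subtype.val ha, congrArg Subtype.val hb⟩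
      · exact hfree

theorem isMinorOf_of_adj (k : ℕ) (Q : Query) (c : Q.V) (f : Fin k → Q.V) (hc : c ∉ Q.free)
    (hf : Function.Injective f) (hfree : ∀ i, f i ∈ Q.free) (hadj : ∀ i, Q.graph.Adj (f i) c) :
    (starQuery k).IsMinorOf Q := by
  let g : Fin k ⊕ Unit → Q.V := Sum.elim f fun _ => c
  have hg : Function.Injective g := by
    refine hf.sumElim (fun _ _ _ => rfl) fun i _ h => hc ?_
    rw [← h]
    exact hfree i
  have hle : (starGraph k).map g ≤ Q.graph := by
    intro x y hxy
    obtain ⟨-, a, b, hab, rfl, rfl⟩ := hxy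
    obtain ⟨-, ⟨i, rfl, rfl⟩ | ⟨i, rfl, rfl⟩⟩ := hab
    · exact hadj i
    · exact (hadj i).symm
  refine Relation.ReflTransGen.trans (reflTransGen_of_le Q.fin Q.free _ Q.graph hle) ?_
  refine isMinorOf_of_star k _ ⟨Q.V, Q.fin, (starGraph k).map g, Q.free⟩ g rfl hg ?_ ?_
  · intro x y
    constructor
    · rintro ⟨-, h⟩
      exact h
    · rintro ⟨a, b, hab, rfl, rfl⟩
      exact ⟨hg.ne hab.ne, a, b, hab, rfl, rfl⟩
  · rintro (i | u)
    · simpa [g] using hfree i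
    · simpa [g] using hc

/-- The contraction argument: it suffices that each `f i` has a neighbour reachable from the
quantified vertex `c` through quantified vertices. -/
theorem isMinorOf_of_reach (k : ℕ) (n : ℕ) : ∀ (Q : Query) (c : Q.V) (f : Fin k → Q.V),
    Nat.card Q.V = n → c ∉ Q.free → Function.Injective f → (∀ i, f i ∈ Q.free) →
    (∀ i, ∃ s, Q.graph.Adj (f i) s ∧
      Relation.ReflTransGen (fun x y => Q.graph.Adj x y ∧ y ∉ Q.free) c s) →
    (starQuery k).IsMinorOf Q := by
  induction n using Nat.strong_induction_on with
  | _ n ih =>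
    intro Q c f hn hc hf hfree hreach
    by_cases hv : ∃ v, Q.graph.Adj c v ∧ v ∉ Q.free
    · obtain ⟨v, hcv, hvX⟩ := hv
      refine Relation.ReflTransGen.head (QueryStep.contract Q c v hcv) ?_
      -- the quotient map of the contraction, sending `v` to `c`
      have hπ : ∃ π : Q.V → (Q.contract c v).V,
          π v = ⟨c, hcv.ne⟩ ∧ ∀ x (h : x ≠ v), π x = ⟨x, h⟩ := by
        classical
        exact ⟨fun x => if h : x = v then ⟨c, hcv.ne⟩ else ⟨x, h⟩, dif_pos rfl,
          fun x h => dif_neg h⟩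
      obtain ⟨π, hπv, hπ⟩ := hπ
      have hfv : ∀ x, x ∈ Q.free → x ≠ v := fun x hx h => hvX (h ▸ hx)
      have hπfree : ∀ x, x ∉ Q.free → π x ∉ (Q.contract c v).free := by
        intro x hx h
        rcases h with h | ⟨-, h⟩
        · by_cases hxv : x = v
          · rw [hxv, hπv] at h
            exact hc h
          · rw [hπ x hxv] at h
            exact hx h
        · exact hvX h
      have hπadj : ∀ x y, Q.graph.Adj x y → π x ≠ π y →
          (Q.contract c v).graph.Adj (π x) (π y) := by
        intro x y hxy hne
        refine ⟨hne, ?_⟩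
        by_cases hxv : x = v
        · subst hxv
          have hy : y ≠ x := hxy.ne'
          left; right
          rw [hπv, hπ y hy]
          exact ⟨rfl, hxy⟩
        · by_cases hyv : y = v
          · subst hyv
            right; right
            rw [hπv, hπ x hxv]
            exact ⟨rfl, hxy.symm⟩
          · left; left
            rw [hπ x hxv, hπ y hyv]
            exact hxy
      refine ih _ (hn ▸ card_ne_lt v) (Q.contract c v) (π c) (fun i => π (f i)) rfl
        (hπfree c hc) ?_ ?_ ?_
      · intro i j hij
        simp only [hπ _ (hfv _ (hfree _))] at hij
        exact hf (congrArg Subtype.val hij)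
      · intro i
        left
        rw [hπ _ (hfv _ (hfree i))]
        exact hfree i
      · intro i
        have hi : π (f i) ∈ (Q.contract c v).free := by
          left
          rw [hπ _ (hfv _ (hfree i))]
          exact hfree i
        obtain ⟨s, hs, hr⟩ := hreach i
        have hsX : s ∉ Q.free := by
          rcases hr.cases_tail with h | ⟨_, -, -, h⟩
          · rwa [h]
          · exact h
        refine ⟨π s, hπadj _ _ hs fun h => hπfree s hsX (h ▸ hi), ?_⟩
        clear hs hsX
        induction hr with
        | refl => exact .refl
        | @tail a b _ hab ihr =>
          by_cases he : π a = π b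
          · rwa [← he]
          · exact ihr.tail ⟨hπadj _ _ hab.1 he, hπfree _ hab.2⟩
    · -- a walk that leaves `c` would have a quantified neighbour of `c` as its second vertex
      refine isMinorOf_of_adj k Q c f hc hf hfree fun i => ?_
      obtain ⟨s, hs, hr⟩ := hreach i
      rcases hr.cases_head with h | ⟨v, h, -⟩
      · rwa [h]
      · exact absurd ⟨v, h⟩ hv

/-- If some connected component `C` of the subgraph induced on the quantified
variables has at least `k` neighbors among the free variables (dominating star
size at least `k`), then the k-star query is a query minor of `(H, X)`. -/
theorem stmt_18 (k : ℕ) (hk : 1 ≤ k) (Q : Query)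
    (hdss : ∃ C : (Q.graph.induce Q.freeᶜ).ConnectedComponent,
      k ≤ {x : Q.V | x ∈ Q.free ∧ ∃ y : ↥(Q.freeᶜ),
            (Q.graph.induce Q.freeᶜ).connectedComponentMk y = C ∧
            Q.graph.Adj x (y : Q.V)}.ncard) :
    (starQuery k).IsMinorOf Q := by
  obtain ⟨C, hC⟩ := hdss
  obtain ⟨c, rfl⟩ := C.exists_rep
  classical
  rw [← Nat.card_coe_set_eq, Nat.card_eq_fintype_card, ← Fintype.card_fin k] at hC
  obtain ⟨f⟩ := Function.Embedding.nonempty_of_card_le hC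
  refine isMinorOf_of_reach k _ Q c (fun i => (f i).1) rfl c.2
    (Subtype.val_injective.comp f.injective) (fun i => (f i).2.1) fun i => ?_
  obtain ⟨-, y, hy, hadj⟩ := (f i).2
  refine ⟨y, hadj, ?_⟩
  have hr := (SimpleGraph.reachable_iff_reflTransGen _ _).1
    (SimpleGraph.ConnectedComponent.exact hy).symm
  exact hr.lift Subtype.val fun a b hab => ⟨hab, b.2⟩
end
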